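/- arXiv:2603.02533 — 2 statements merged into one kernel-verified Lean document; each statement's English description precedes it below -/
import Mathlib

section
/- Let γ ≥ 0, let S be a finite set with |S| ≥ 2, and let P : S → ℝ satisfy P(x) > 0 for all x ∈ S and ∑_{x∈S} P(x) = 1. Suppose α > 0 and Q* : S → ℝ satisfy 0 < Q*(x) < 1, L'_γ(Q*(x)) = -α/P(x) for all x ∈ S, and ∑_{x∈S} Q*(x) = 1. Let X be a finite set containing S and let Q : X → ℝ satisfy Q(y) ≥ 0 for all y ∈ X, ∑_{y∈X} Q(y) = 1, and Q(x) > 0 for all x ∈ S. Then ∑_{x∈S} P(x)·(1-Q(x))^γ·log(1/Q(x)) ≥ H_γ(P,Q*) + α·(1 − ∑_{x∈S} Q(x)) ≥ H_γ(P,Q*), where H_γ(P,Q*) = ∑_{x∈S} P(x)·(1-Q*(x))^γ·log(1/Q*(x)). -/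
/-- The closed form of the first derivative of the focal-loss,
`L'_γ(p) = -(1-p)^(γ-1) (γ log(1/p) + (1-p)/p)`. -/
noncomputable def focalLossDeriv (γ p : ℝ) : ℝ :=
  -((1 - p) ^ (γ - 1) * (γ * Real.log (1 / p) + (1 - p) / p))

/-!
The derivative of the focal loss is `-(1 - p) ^ γ * (γ * log (1 / p) / (1 - p) + 1 / p)`. Since
`log (1 / p) / (1 - p)` is the slope of the secant of `log` from `1` to `p`, concavity of `log`
makes both factors antitone, so the focal loss is convex. It therefore lies above its tangent at
each `Q* x`; stationarity makes all these tangents, weighted by `P x`, have the same slope `-α`,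
and their sum depends on `Q` only through its total mass.
-/

lemma add_mul_sub_le_of_convexOn_of_hasDerivAt {s : Set ℝ} {f : ℝ → ℝ} {f' x y : ℝ}
    (hf : ConvexOn ℝ s f) (hx : x ∈ s) (hy : y ∈ s) (hf' : HasDerivAt f f' x) :
    f x + f' * (y - x) ≤ f y := by
  rcases lt_trichotomy x y with hxy | rfl | hyx
  · have hslope := hf.le_slope_of_hasDerivAt hx hy hxy hf'
    rw [slope_def_field, le_div_iff₀ (sub_pos.2 hxy)] at hslope
    linarith
  · simp
  · have hslope := hf.slope_le_of_hasDerivAt hy hx hyx hf'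
    rw [slope_def_field, div_le_iff₀ (sub_pos.2 hyx)] at hslope
    linarith

section FocalLoss

variable {γ p q : ℝ}

/-- The focal loss of the predicted probability `p`, with focusing parameter `γ`. -/
noncomputable def focalLoss (γ p : ℝ) : ℝ :=
  (1 - p) ^ γ * Real.log (1 / p)

lemma hasDerivAt_focalLoss (hp₀ : p ≠ 0) (hp₁ : p ≠ 1) :
    HasDerivAt (focalLoss γ) (focalLossDeriv γ p) p := by
  have hsub : 1 - p ≠ 0 := sub_ne_zero.2 hp₁.symm
  have hpow : HasDerivAt (fun p : ℝ => (1 - p) ^ γ) (-1 * γ * (1 - p) ^ (γ - 1)) p :=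
    ((hasDerivAt_id p).const_sub 1).rpow_const (Or.inl hsub)
  have hlog : HasDerivAt (fun p : ℝ => Real.log (1 / p)) (-p⁻¹) p := by
    simpa only [one_div, Real.log_inv] using (Real.hasDerivAt_log hp₀).fun_neg
  refine (hpow.mul hlog).congr_deriv ?_
  rw [focalLossDeriv, Real.rpow_sub_one hsub]
  field_simp
  ring

lemma focalLossDeriv_eq_neg_rpow_mul_slope_log (hp : p ≠ 1) :
    focalLossDeriv γ p = -((1 - p) ^ γ * (γ * slope Real.log 1 p + 1 / p)) := by
  have hsub : 1 - p ≠ 0 := sub_ne_zero.2 hp.symm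
  have hslope : slope Real.log 1 p = Real.log (1 / p) / (1 - p) := by
    rw [slope_def_field, Real.log_one, sub_zero, one_div, Real.log_inv, ← neg_sub 1 p, div_neg,
      neg_div]
  rw [focalLossDeriv, hslope, Real.rpow_sub_one hsub]
  field_simp

lemma monotoneOn_focalLossDeriv (hγ : 0 ≤ γ) : MonotoneOn (focalLossDeriv γ) (Set.Ioo 0 1) := by
  rintro p ⟨hp₀, hp₁⟩ q ⟨hq₀, hq₁⟩ hpq
  have hrpow : (1 - q) ^ γ ≤ (1 - p) ^ γ :=
    Real.rpow_le_rpow (sub_nonneg.2 hq₁.le) (sub_le_sub_left hpq 1) hγ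
  have hslope : slope Real.log 1 q ≤ slope Real.log 1 p :=
    strictConcaveOn_log_Ioi.concaveOn.slope_anti (Set.mem_Ioi.2 one_pos)
      ⟨hp₀, hp₁.ne⟩ ⟨hq₀, hq₁.ne⟩ hpq
  have hslope_nonneg : 0 ≤ slope Real.log 1 q := by
    rw [slope_def_field, Real.log_one, sub_zero]
    exact div_nonneg_of_nonpos (Real.log_nonpos hq₀.le hq₁.le) (sub_nonpos.2 hq₁.le)
  have hinv : 1 / q ≤ 1 / p := one_div_le_one_div_of_le hp₀ hpq
  rw [focalLossDeriv_eq_neg_rpow_mul_slope_log hp₁.ne,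
    focalLossDeriv_eq_neg_rpow_mul_slope_log hq₁.ne]
  exact neg_le_neg (mul_le_mul hrpow (add_le_add (mul_le_mul_of_nonneg_left hslope hγ) hinv)
    (by positivity) (Real.rpow_nonneg (sub_nonneg.2 hp₁.le) γ))

lemma continuousOn_focalLoss (hγ : 0 ≤ γ) : ContinuousOn (focalLoss γ) {0}ᶜ := by
  have hpow : ContinuousOn (fun p : ℝ => (1 - p) ^ γ) {0}ᶜ :=
    (continuousOn_const.sub continuousOn_id).rpow_const fun _ _ => Or.inr hγ
  have hlog : ContinuousOn (fun p : ℝ => Real.log (1 / p)) {0}ᶜ := by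
    simpa only [one_div, Real.log_inv] using Real.continuousOn_log.fun_neg
  exact hpow.mul hlog

lemma convexOn_focalLoss (hγ : 0 ≤ γ) : ConvexOn ℝ (Set.Ioc 0 1) (focalLoss γ) := by
  have hderiv : ∀ p ∈ Set.Ioo (0 : ℝ) 1, HasDerivAt (focalLoss γ) (focalLossDeriv γ p) p :=
    fun p hp => hasDerivAt_focalLoss hp.1.ne' hp.2.ne
  refine MonotoneOn.convexOn_of_deriv (convex_Ioc 0 1)
    ((continuousOn_focalLoss hγ).mono fun p hp => hp.1.ne') ?_ ?_ <;> rw [interior_Ioc]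
  · exact fun p hp => (hderiv p hp).differentiableAt.differentiableWithinAt
  · exact (monotoneOn_focalLossDeriv hγ).congr fun p hp => (hderiv p hp).deriv.symm

lemma focalLoss_add_focalLossDeriv_mul_sub_le (hγ : 0 ≤ γ) (hp : p ∈ Set.Ioo 0 1)
    (hq : q ∈ Set.Ioc 0 1) : focalLoss γ p + focalLossDeriv γ p * (q - p) ≤ focalLoss γ q :=
  add_mul_sub_le_of_convexOn_of_hasDerivAt (convexOn_focalLoss hγ) (Set.Ioo_subset_Ioc_self hp) hq
    (hasDerivAt_focalLoss hp.1.ne' hp.2.ne)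

end FocalLoss

/-- The focal-entropy `H_γ(P, Q)`: the expected focal loss under `P` of predicting `Q`, for functions
`P`, `Q` on an ambient type of which only the values on the finite set `S` count. -/
noncomputable def focalEntropy {X : Type*} (S : Finset X) (γ : ℝ) (P Q : X → ℝ) : ℝ :=
  ∑ x ∈ S, P x * (1 - Q x) ^ γ * Real.log (1 / Q x)

theorem focalEntropy_ge_of_stationary_general {X : Type*} (S : Finset X) {γ α : ℝ} (hγ : 0 ≤ γ)
    {P Qstar Q : X → ℝ} (hP : ∀ x ∈ S, 0 < P x)
    (hQstar : ∀ x ∈ S, 0 < Qstar x ∧ Qstar x < 1 ∧ focalLossDeriv γ (Qstar x) = -α / P x)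
    (hQ : ∀ x ∈ S, Q x ∈ Set.Ioc 0 1) :
    focalEntropy S γ P Q ≥
      focalEntropy S γ P Qstar + α * (∑ x ∈ S, Qstar x - ∑ x ∈ S, Q x) := by
  rw [focalEntropy, focalEntropy, ← Finset.sum_sub_distrib, Finset.mul_sum,
    ← Finset.sum_add_distrib]
  refine Finset.sum_le_sum fun x hx => ?_
  obtain ⟨hpos, hlt, hstat⟩ := hQstar x hx
  have hslope : P x * focalLossDeriv γ (Qstar x) = -α := by
    rw [hstat, mul_div_cancel₀ _ (hP x hx).ne']
  calc P x * (1 - Qstar x) ^ γ * Real.log (1 / Qstar x) + α * (Qstar x - Q x)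
      = P x * (focalLoss γ (Qstar x) + focalLossDeriv γ (Qstar x) * (Q x - Qstar x)) := by
        rw [focalLoss]
        linear_combination (Qstar x - Q x) * hslope
    _ ≤ P x * focalLoss γ (Q x) :=
        mul_le_mul_of_nonneg_left
          (focalLoss_add_focalLossDeriv_mul_sub_le hγ ⟨hpos, hlt⟩ (hQ x hx)) (hP x hx).le
    _ = P x * (1 - Q x) ^ γ * Real.log (1 / Q x) := (mul_assoc _ _ _).symm

/-- the stationary point `Q*` of the focal-entropy is a global
minimizer: for any probability vector `Q` on a finite superset `X ⊇ S` which is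
positive on `S`,
`H_γ(P,Q) ≥ H_γ(P,Q*) + α (1 − ∑_{x∈S} Q x) ≥ H_γ(P,Q*)`. -/
theorem focalEntropy_ge_of_stationary
    {X : Type*} [Fintype X] (S : Finset X) (hS : 2 ≤ S.card)
    (γ : ℝ) (hγ : 0 ≤ γ)
    (P : X → ℝ) (hP : ∀ x ∈ S, 0 < P x) (hPsum : ∑ x ∈ S, P x = 1)
    (α : ℝ) (hα : 0 < α)
    (Qstar : X → ℝ)
    (hQstar : ∀ x ∈ S, 0 < Qstar x ∧ Qstar x < 1 ∧
      focalLossDeriv γ (Qstar x) = -α / P x)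
    (hQstarsum : ∑ x ∈ S, Qstar x = 1)
    (Q : X → ℝ) (hQ0 : ∀ y, 0 ≤ Q y) (hQsum : ∑ y, Q y = 1)
    (hQpos : ∀ x ∈ S, 0 < Q x) :
    (∑ x ∈ S, P x * (1 - Q x) ^ γ * Real.log (1 / Q x) ≥
      (∑ x ∈ S, P x * (1 - Qstar x) ^ γ * Real.log (1 / Qstar x)) +
        α * (1 - ∑ x ∈ S, Q x)) ∧
    ((∑ x ∈ S, P x * (1 - Qstar x) ^ γ * Real.log (1 / Qstar x)) +
        α * (1 - ∑ x ∈ S, Q x) ≥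
      ∑ x ∈ S, P x * (1 - Qstar x) ^ γ * Real.log (1 / Qstar x)) := by
  have hQ1 : ∀ x, Q x ≤ 1 := fun x =>
    hQsum ▸ Finset.single_le_sum (fun y _ => hQ0 y) (Finset.mem_univ x)
  have hQS : ∑ x ∈ S, Q x ≤ 1 := hQsum ▸ Finset.sum_le_univ_sum_of_nonneg hQ0
  refine ⟨?_, le_add_of_nonneg_right (mul_nonneg hα.le (sub_nonneg.2 hQS))⟩
  simpa only [focalEntropy, hQstarsum] using
    focalEntropy_ge_of_stationary_general S hγ hP hQstar fun x hx => ⟨hQpos x hx, hQ1 x⟩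
end

section
/- Let γ > 0, let S be a finite set with |S| ≥ 2, and let P : S → ℝ satisfy P(x) > 0 for all x ∈ S and ∑_{x∈S} P(x) = 1. Suppose α > 0 and Q* : S → ℝ satisfy 0 < Q*(x) < 1, L'_γ(Q*(x)) = -α/P(x) for all x ∈ S, and ∑_{x∈S} Q*(x) = 1. Then for every x ∈ S: if φ_γ(P(x)) ≤ α then Q*(x) ≤ P(x), and if φ_γ(P(x)) > α then Q*(x) > P(x). -/
/-- `φ_γ(p) = p (1-p)^(γ-1) (γ log(1/p) + (1-p)/p) = -p L'_γ(p)`. -/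
noncomputable def phiGamma (γ p : ℝ) : ℝ :=
  p * (1 - p) ^ (γ - 1) * (γ * Real.log (1 / p) + (1 - p) / p)

/-!
Since `φ_γ(p) = -p L'_γ(p)`, the stationarity condition `L'_γ(q) = -α / p` turns the comparison of
`φ_γ(p)` with `α` into the comparison of `L'_γ(q)` with `L'_γ(p)`, so it suffices that `L'_γ` is
strictly increasing. Absorbing the factor `1 - p` into the power gives
`-L'_γ(p) = (1 - p)^γ (γ s(p) + 1/p)`, where `s(p)` is the slope of the chord of `log` between
`1` and `p`. All of `(1 - p)^γ`, `s` (by concavity of `log`) and `1/p` are positive and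
nonincreasing, and the last one is strictly decreasing.
-/

open Real Set

theorem lt_sum_of_forall_pos {ι M : Type*} [Fintype ι] [Nontrivial ι] [AddCommMonoid M]
    [PartialOrder M] [IsOrderedCancelAddMonoid M] {f : ι → M}
    (hf : ∀ i, 0 < f i) (i : ι) : f i < ∑ j, f j := by
  obtain ⟨j, hj⟩ := exists_ne i
  exact Finset.single_lt_sum hj (Finset.mem_univ i) (Finset.mem_univ j) (hf j)
    fun k _ _ ↦ (hf k).le

theorem antitoneOn_slope_log {x : ℝ} (hx : 0 < x) : AntitoneOn (slope log x) (Ioi 0 \ {x}) :=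
  strictConcaveOn_log_Ioi.concaveOn.slope_anti (mem_Ioi.2 hx)

theorem focalLossDeriv_eq_neg_rpow_mul_slope {γ p : ℝ} (hp : p ≠ 1) :
    focalLossDeriv γ p = -((1 - p) ^ γ * (γ * slope log 1 p + p⁻¹)) := by
  have h : 1 - p ≠ 0 := sub_ne_zero.2 hp.symm
  have hslope : slope log 1 p = log (1 / p) / (1 - p) := by
    rw [slope_def_field, log_one, one_div, log_inv, sub_zero, ← neg_sub p, neg_div_neg_eq]
  rw [focalLossDeriv, rpow_sub_one h, hslope]
  field_simp

theorem strictMonoOn_focalLossDeriv {γ : ℝ} (hγ : 0 ≤ γ) :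
    StrictMonoOn (focalLossDeriv γ) (Ioo 0 1) := by
  intro a ha b hb hab
  have hpow : (1 - b) ^ γ ≤ (1 - a) ^ γ :=
    rpow_le_rpow (sub_nonneg.2 hb.2.le) (by linarith) hγ
  have hpow_pos : 0 < (1 - a) ^ γ := rpow_pos_of_pos (sub_pos.2 ha.2) γ
  have hslope : slope log 1 b ≤ slope log 1 a :=
    antitoneOn_slope_log one_pos ⟨ha.1, ha.2.ne⟩ ⟨hb.1, hb.2.ne⟩ hab.le
  have hslope_pos : 0 < slope log 1 b :=
    strictMonoOn_log.slope_pos (mem_Ioi.2 one_pos) hb.1 hb.2.ne'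
  have hinv : b⁻¹ < a⁻¹ := inv_strictAnti₀ ha.1 hab
  have hinv_pos : 0 < b⁻¹ := inv_pos.2 hb.1
  rw [focalLossDeriv_eq_neg_rpow_mul_slope ha.2.ne, focalLossDeriv_eq_neg_rpow_mul_slope hb.2.ne,
    neg_lt_neg_iff]
  calc (1 - b) ^ γ * (γ * slope log 1 b + b⁻¹)
      ≤ (1 - a) ^ γ * (γ * slope log 1 b + b⁻¹) := by gcongr
    _ < (1 - a) ^ γ * (γ * slope log 1 a + a⁻¹) :=
        mul_lt_mul_of_pos_left
          (add_lt_add_of_le_of_lt (mul_le_mul_of_nonneg_left hslope hγ) hinv) hpow_pos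

theorem phiGamma_eq_neg_mul_focalLossDeriv (γ p : ℝ) :
    phiGamma γ p = -(focalLossDeriv γ p * p) := by
  rw [phiGamma, focalLossDeriv]
  ring

theorem focalEntropy_minimizer_suppress_amplify_general {γ p q α : ℝ} (hγ : 0 ≤ γ)
    (hp : p ∈ Ioo 0 1) (hq : q ∈ Ioo 0 1) (hstat : focalLossDeriv γ q = -α / p) :
    phiGamma γ p ≤ α ↔ q ≤ p :=
  calc phiGamma γ p ≤ α
    _ ↔ -α ≤ focalLossDeriv γ p * p := by rw [phiGamma_eq_neg_mul_focalLossDeriv, neg_le]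
    _ ↔ focalLossDeriv γ q ≤ focalLossDeriv γ p := by rw [hstat, div_le_iff₀ hp.1]
    _ ↔ q ≤ p := (strictMonoOn_focalLossDeriv hγ).le_iff_le hq hp

/-- for every `x`: if `φ_γ(P x) ≤ α` then `Q* x ≤ P x`, and if
`φ_γ(P x) > α` then `Q* x > P x`. -/
theorem focalEntropy_minimizer_suppress_amplify
    {ι : Type*} [Fintype ι] (hcard : 2 ≤ Fintype.card ι)
    (γ : ℝ) (hγ : 0 < γ)
    (P : ι → ℝ) (hP : ∀ x, 0 < P x) (hPsum : ∑ x, P x = 1)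
    (α : ℝ) (hα : 0 < α)
    (Qstar : ι → ℝ)
    (hQstar : ∀ x, 0 < Qstar x ∧ Qstar x < 1 ∧
      focalLossDeriv γ (Qstar x) = -α / P x)
    (hQstarsum : ∑ x, Qstar x = 1) :
    ∀ x : ι, (phiGamma γ (P x) ≤ α → Qstar x ≤ P x) ∧
      (α < phiGamma γ (P x) → P x < Qstar x) := by
  intro x
  have : Nontrivial ι := Fintype.one_lt_card_iff_nontrivial.1 hcard
  obtain ⟨hQ_pos, hQ_lt_one, hstat⟩ := hQstar x
  have hP_lt_one : P x < 1 := hPsum ▸ lt_sum_of_forall_pos hP x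
  have hiff := focalEntropy_minimizer_suppress_amplify_general hγ.le ⟨hP x, hP_lt_one⟩
    ⟨hQ_pos, hQ_lt_one⟩ hstat
  exact ⟨hiff.1, (lt_iff_lt_of_le_iff_le hiff).1⟩
end
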